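/- Let k ≥ 1 and let γ be an integer with −k ≤ γ ≤ −1. Then the left ideal J = A₁(Y∂ − γ) + A₁Y^k satisfies J = A₁(Y∂ − γ) + A₁Y^{|γ|}, and J is a maximal left ideal of A₁ (equivalently, A₁/J is a simple A₁-module, isomorphic to ℂ[y]_y/ℂ[y]). -/

import Mathlib

set_option synthInstance.maxHeartbeats 1000000
set_option maxHeartbeats 1000000

/-- Multiplication by the variable `y`, as an endomorphism of `ℂ[y]`. -/
noncomputable def Yop : Module.End ℂ (Polynomial ℂ) := LinearMap.mulLeft ℂ Polynomial.X

/-- The formal derivative `∂`, as an endomorphism of `ℂ[y]`. -/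
noncomputable def Dop : Module.End ℂ (Polynomial ℂ) :=
  (Polynomial.derivative : Polynomial ℂ →ₗ[ℂ] Polynomial ℂ)

/-- The Weyl algebra `A₁`, realized as the ℂ-subalgebra of `End_ℂ(ℂ[y])` generated by
`Y` and `∂`. -/
noncomputable def A1 : Subalgebra ℂ (Module.End ℂ (Polynomial ℂ)) :=
  Algebra.adjoin ℂ {Yop, Dop}

/-- `Y` and `∂` as elements of `A₁`. -/
noncomputable def wY : A1 := ⟨Yop, Algebra.subset_adjoin (by simp)⟩
noncomputable def wD : A1 := ⟨Dop, Algebra.subset_adjoin (by simp)⟩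

/-!
In the ideal `J` generated by `Y∂ - γ` and `Y ^ k`, one has `∂ Y ^ (n + 1) ≡ (γ + n + 1) Y ^ n`
modulo `J`, so `∂` lowers the exponent of a power of `Y` as long as the exponent stays away
from `|γ|`. This gives the equality of ideals, and shows that `A₁ / J` is generated by the class `v`
of `Y ^ (|γ| - 1)`, which `Y` kills. Every element of `A₁ / J` is then `p(-∂) v` for some
polynomial `p`, and `Y` acts on it by differentiating `p`; differentiating `deg p` times recovers
a nonzero multiple of `v`, so `A₁ / J` is simple or zero.

It is not zero: on a fixed diagonal, the matrix entries of an element of `A₁` in the monomial basis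
are values of a polynomial. Comparing diagonal entries, `1 = a (Y∂ - γ) + b Y ^ |γ|` becomes the
polynomial identity `1 = p(t) (t - γ) + q(t - γ)`, where `q(0) = 0` because `b(1)` has no
coefficient of negative degree; this fails at `t = γ`.
-/

open Polynomial

lemma iterate_derivative_natDegree {R : Type*} [Semiring R] (p : R[X]) :
    derivative^[p.natDegree] p = C (p.natDegree.factorial * p.leadingCoeff) := by
  have hdeg : (derivative^[p.natDegree] p).natDegree = 0 := by
    simpa using natDegree_iterate_derivative p p.natDegree
  rw [eq_C_of_natDegree_eq_zero hdeg, coeff_iterate_derivative, zero_add,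
    Nat.descFactorial_self, nsmul_eq_mul, coeff_natDegree]

lemma coeff_X_pow_mul_derivative {R : Type*} [CommRing R] (p : R[X]) (i n : ℕ) :
    (X ^ i * derivative p).coeff n = (n + 1 - i : R) * (X ^ i * p).coeff (n + 1) := by
  obtain hlt | rfl | hle : n + 1 < i ∨ i = n + 1 ∨ i ≤ n := by omega
  · rw [coeff_X_pow_mul', coeff_X_pow_mul', if_neg (by omega), if_neg (by omega), mul_zero]
  · rw [coeff_X_pow_mul', if_neg (by omega)]
    push_cast
    ring
  · obtain ⟨l, rfl⟩ := Nat.exists_eq_add_of_le' hle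
    rw [coeff_X_pow_mul, coeff_derivative, add_right_comm l i 1, coeff_X_pow_mul]
    push_cast
    ring

section Adjoin

variable {K A M : Type*} [CommSemiring K] [Semiring A] [Algebra K A] [AddCommMonoid M]
  [Module K M] [Module A M] [IsScalarTower K A M]

lemma smul_mem_of_mem_adjoin {s : Set A} {N : Submodule K M}
    (hN : ∀ x ∈ s, ∀ u ∈ N, x • u ∈ N) {a : A} (ha : a ∈ Algebra.adjoin K s) {u : M} (hu : u ∈ N) :
    a • u ∈ N := by
  induction ha using Algebra.adjoin_induction generalizing u with
  | mem x hx => exact hN x hx u hu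
  | algebraMap c => simpa only [algebraMap_smul] using N.smul_mem c hu
  | add x z _ _ hx hz => simpa only [add_smul] using N.add_mem (hx hu) (hz hu)
  | mul x z _ _ hx hz => simpa only [mul_smul] using hx (hz hu)

end Adjoin

section WeylRelation

section Semiring

variable {K A M : Type*} [CommSemiring K] [Semiring A] [Algebra K A] [AddCommMonoid M]
  [Module A M] {x z : A}

lemma mul_aeval_of_mul_eq_mul_add_one (h : x * z = z * x + 1) (p : K[X]) :
    x * aeval z p = aeval z p * x + aeval z (derivative p) := by
  induction p using Polynomial.induction_on with
  | C c => simpa using (Algebra.commutes c x).symm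
  | add p q hp hq => simp only [map_add, mul_add, add_mul, hp, hq]; abel
  | monomial n c ih =>
    rw [pow_succ, ← mul_assoc, derivative_mul, derivative_X, mul_one, map_mul (aeval z) _ X,
      map_add, map_mul (aeval z) _ X, aeval_X, ← mul_assoc, ih, add_mul, mul_assoc _ x z, h,
      mul_add, mul_one, ← mul_assoc, add_right_comm, ← add_assoc]

lemma pow_smul_aeval_smul (h : x * z = z * x + 1) {v : M} (hv : x • v = 0) (p : K[X]) (n : ℕ) :
    x ^ n • aeval z p • v = aeval z (derivative^[n] p) • v := by
  induction n with
  | zero => simp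
  | succ n ih =>
    rw [pow_succ', mul_smul, ih, ← mul_smul, mul_aeval_of_mul_eq_mul_add_one h, add_smul, mul_smul,
      hv, smul_zero, zero_add, Function.iterate_succ_apply']

end Semiring

section CommRing

variable {K A M : Type*} [CommRing K] [Ring A] [Algebra K A] [AddCommGroup M]
  [Module A M] {y d : A}

lemma mul_neg_eq_neg_mul_add_one (h : d * y = y * d + 1) : y * -d = -d * y + 1 := by
  rw [neg_mul, h]
  noncomm_ring

lemma exists_aeval_neg_smul_eq [Module K M] [IsScalarTower K A M] (h : d * y = y * d + 1)
    (hgen : Algebra.adjoin K {y, d} = ⊤) {v : M} (hv : y • v = 0)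
    (hspan : Submodule.span A {v} = ⊤) (w : M) : ∃ p : K[X], aeval (-d) p • v = w := by
  let evalSMul : K[X] →ₗ[K] M :=
    (LinearMap.toSpanSingleton A M v).restrictScalars K ∘ₗ (aeval (-d)).toLinearMap
  have hstable : ∀ x ∈ ({y, d} : Set A), ∀ u ∈ evalSMul.range, x • u ∈ evalSMul.range := by
    rintro x (rfl | rfl) _ ⟨p, rfl⟩
    · refine ⟨derivative p, ?_⟩
      simpa [evalSMul] using
        (pow_smul_aeval_smul (mul_neg_eq_neg_mul_add_one h) hv p 1).symm
    · exact ⟨-(X * p), by simp [evalSMul, mul_smul]⟩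
  obtain ⟨a, rfl⟩ := Submodule.mem_span_singleton.1 (hspan ▸ Submodule.mem_top (x := w))
  exact smul_mem_of_mem_adjoin hstable (hgen ▸ Algebra.mem_top) ⟨1, by simp [evalSMul]⟩

lemma mul_pow_succ_of_mul_eq_mul_add_one (h : d * y = y * d + 1) (c : K) (n : ℕ) :
    d * y ^ (n + 1) = y ^ n * (y * d - algebraMap K A c) + (c + n + 1) • y ^ n := by
  have hpow := mul_aeval_of_mul_eq_mul_add_one h (X ^ (n + 1) : K[X])
  simp only [map_pow, aeval_X, derivative_X_pow, map_mul, aeval_C, Nat.add_sub_cancel,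
    ← Algebra.smul_def] at hpow
  rw [hpow, mul_sub, ← Algebra.commutes, ← Algebra.smul_def, pow_succ, mul_assoc]
  push_cast
  module

end CommRing

variable {K A M : Type*} [Field K] [Ring A] [Algebra K A] [AddCommGroup M]
  [Module A M] {y d : A} {c : K}

lemma pow_smul_mem_of_pow_smul_mem (h : d * y = y * d + 1) {N : Submodule A M} {u : M}
    (hu : (y * d - algebraMap K A c) • u ∈ N) {m k : ℕ} (hmk : m ≤ k)
    (hc : ∀ n, m ≤ n → n < k → c + n + 1 ≠ 0) (hk : y ^ k • u ∈ N) : y ^ m • u ∈ N := by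
  induction hmk using Nat.decreasingInduction with
  | self => exact hk
  | of_succ n hn ih =>
    have hlow : d • y ^ (n + 1) • u ∈ N :=
      N.smul_mem d (ih fun l hl => hc l (by omega))
    rw [← mul_smul, mul_pow_succ_of_mul_eq_mul_add_one h c, add_smul, mul_smul,
      N.add_mem_iff_right (N.smul_mem _ hu)] at hlow
    have hscale := N.smul_mem (algebraMap K A (c + n + 1)⁻¹) hlow
    rwa [← mul_smul, ← Algebra.smul_def, smul_smul, inv_mul_cancel₀ (hc n le_rfl hn),
      one_smul] at hscale

lemma isSimpleModule_of_smul_eq_zero [CharZero K] [Module K M] [IsScalarTower K A M] [Nontrivial M]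
    (h : d * y = y * d + 1) (hgen : Algebra.adjoin K {y, d} = ⊤) {v : M}
    (hv : y • v = 0) (hspan : Submodule.span A {v} = ⊤) : IsSimpleModule A M := by
  refine isSimpleModule_iff_toSpanSingleton_surjective.2 ⟨inferInstance, fun w hw => ?_⟩
  rw [← LinearMap.range_eq_top, LinearMap.range_toSpanSingleton, eq_top_iff, ← hspan,
    Submodule.span_singleton_le_iff_mem]
  obtain ⟨p, rfl⟩ := exists_aeval_neg_smul_eq h hgen hv hspan w
  have hp : p ≠ 0 := by
    rintro rfl
    simp at hw
  set a : K := p.natDegree.factorial * p.leadingCoeff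
  have ha : a ≠ 0 := mul_ne_zero (by exact_mod_cast p.natDegree.factorial_ne_zero)
    (leadingCoeff_ne_zero.2 hp)
  refine Submodule.mem_span_singleton.2 ⟨algebraMap K A a⁻¹ * y ^ p.natDegree, ?_⟩
  rw [mul_smul, pow_smul_aeval_smul (mul_neg_eq_neg_mul_add_one h) hv,
    iterate_derivative_natDegree, aeval_C, ← mul_smul, ← map_mul, inv_mul_cancel₀ ha, map_one,
    one_smul]

lemma isMaximal_of_pow_succ_mem [CharZero K] (h : d * y = y * d + 1)
    (hgen : Algebra.adjoin K {y, d} = ⊤) {J : Ideal A} (hJ : J ≠ ⊤)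
    (hyd : y * d - algebraMap K A c ∈ J) {r : ℕ} (hy : y ^ (r + 1) ∈ J)
    (hc : ∀ n < r, c + n + 1 ≠ 0) : J.IsMaximal := by
  let u : A ⧸ J := Submodule.Quotient.mk 1
  have hsmul (a : A) : a • u = Submodule.Quotient.mk a := by
    rw [← Submodule.Quotient.mk_smul, smul_eq_mul, mul_one]
  have hu : (y * d - algebraMap K A c) • u = 0 := by
    rwa [hsmul, Submodule.Quotient.mk_eq_zero]
  have hv : y • y ^ r • u = 0 := by
    rwa [← mul_smul, ← pow_succ', hsmul, Submodule.Quotient.mk_eq_zero]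
  have hmem : y ^ 0 • u ∈ Submodule.span A {y ^ r • u} :=
    pow_smul_mem_of_pow_smul_mem h (hu ▸ zero_mem _) r.zero_le (fun n _ => hc n)
      (Submodule.mem_span_singleton_self _)
  have hspan : Submodule.span A {y ^ r • u} = ⊤ := by
    refine eq_top_iff.2 fun w _ => ?_
    obtain ⟨a, rfl⟩ := Submodule.Quotient.mk_surjective J w
    rw [← hsmul]
    simpa only [pow_zero, one_smul] using Submodule.smul_mem _ a hmem
  have : Nontrivial (A ⧸ J) := Submodule.Quotient.nontrivial_iff.2 hJ
  exact Ideal.isMaximal_def.2 <| isSimpleModule_iff_isCoatom.1 <|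
    isSimpleModule_of_smul_eq_zero h hgen hv hspan

lemma span_pair_pow_eq_span_pair_pow (h : d * y = y * d + 1) {m k : ℕ} (hmk : m ≤ k)
    (hc : ∀ n, m ≤ n → n < k → c + n + 1 ≠ 0) :
    Ideal.span {y * d - algebraMap K A c, y ^ k} =
      Ideal.span {y * d - algebraMap K A c, y ^ m} := by
  apply le_antisymm <;> rw [Ideal.span_le, Set.pair_subset_iff]
  · exact ⟨Ideal.subset_span (Set.mem_insert _ _), pow_sub_mul_pow y hmk ▸
      Ideal.mul_mem_left _ _ (Ideal.subset_span (Set.mem_insert_of_mem _ rfl))⟩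
  · have hyd := Ideal.subset_span (Set.mem_insert (y * d - algebraMap K A c) {y ^ k})
    have hyk := Ideal.subset_span (Set.mem_insert_of_mem (y * d - algebraMap K A c)
      (Set.mem_singleton (y ^ k)))
    refine ⟨hyd, ?_⟩
    simpa using pow_smul_mem_of_pow_smul_mem (u := (1 : A)) h (by simpa using hyd) hmk hc
      (by simpa using hyk)

end WeylRelation

section PolynomialDiagonals

variable {R : Type*} [CommRing R]

variable (R) in
/-- The operators on `R[X]` whose matrix entries in the monomial basis are, along each diagonal,
the values of a polynomial at the column index. The diagonal of offset `l - i` is read off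
`X ^ i * T (X ^ j)` at degree `j + l`, so that entries in rows of negative index count as zero. -/
def polynomialDiagonals : Submodule R (Module.End R R[X]) where
  carrier := {T | ∀ i l : ℕ, ∃ p : R[X], ∀ j : ℕ,
    (X ^ i * T (X ^ j)).coeff (j + l) = p.eval (j : R)}
  zero_mem' _ _ := ⟨0, by simp⟩
  add_mem' hS hT i l := by
    obtain ⟨p, hp⟩ := hS i l
    obtain ⟨q, hq⟩ := hT i l
    exact ⟨p + q, fun j => by simp [mul_add, hp, hq]⟩
  smul_mem' c T hT i l := by
    obtain ⟨p, hp⟩ := hT i l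
    exact ⟨C c * p, fun j => by simp [hp]⟩

lemma one_mem_polynomialDiagonals : 1 ∈ polynomialDiagonals R := by
  refine fun i l => ⟨if l = i then 1 else 0, fun j => ?_⟩
  rw [Module.End.one_apply, ← pow_add, coeff_X_pow, apply_ite (eval (j : R)), eval_one, eval_zero]
  exact if_congr (by omega) rfl rfl

lemma mulLeft_X_mul_mem_polynomialDiagonals {T : Module.End R R[X]}
    (hT : T ∈ polynomialDiagonals R) : LinearMap.mulLeft R X * T ∈ polynomialDiagonals R := by
  intro i l
  obtain ⟨p, hp⟩ := hT (i + 1) l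
  exact ⟨p, fun j => by simpa [pow_succ, mul_assoc] using hp j⟩

lemma derivative_mul_mem_polynomialDiagonals {T : Module.End R R[X]}
    (hT : T ∈ polynomialDiagonals R) : derivative * T ∈ polynomialDiagonals R := by
  intro i l
  obtain ⟨p, hp⟩ := hT i (l + 1)
  refine ⟨(X + C (l + 1 - i : R)) * p, fun j => ?_⟩
  rw [Module.End.mul_apply, coeff_X_pow_mul_derivative, add_assoc j, hp, eval_mul, eval_add, eval_X,
    eval_C]
  push_cast
  ring

end PolynomialDiagonals

lemma A1_le_polynomialDiagonals : Subalgebra.toSubmodule A1 ≤ polynomialDiagonals ℂ := by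
  intro T hT
  have hstable : ∀ x ∈ ({Yop, Dop} : Set (Module.End ℂ ℂ[X])), ∀ S ∈ polynomialDiagonals ℂ,
      x • S ∈ polynomialDiagonals ℂ := by
    rintro x (rfl | rfl) S hS
    · exact mulLeft_X_mul_mem_polynomialDiagonals hS
    · exact derivative_mul_mem_polynomialDiagonals hS
  have hmem : T • (1 : Module.End ℂ ℂ[X]) ∈ polynomialDiagonals ℂ :=
    smul_mem_of_mem_adjoin hstable hT one_mem_polynomialDiagonals
  rwa [smul_eq_mul, mul_one] at hmem

lemma wD_mul_wY : wD * wY = wY * wD + 1 := by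
  apply Subtype.ext
  change Dop * Yop = Yop * Dop + 1
  exact LinearMap.ext fun p => by simp [Dop, Yop, add_comm]

lemma adjoin_wY_wD : Algebra.adjoin ℂ {wY, wD} = ⊤ := by
  have hpre : ((↑) : A1 → Module.End ℂ ℂ[X]) ⁻¹' {Yop, Dop} = {wY, wD} := by
    ext a
    simp [Subtype.ext_iff, wY, wD]
  rw [← hpre]
  exact Algebra.adjoin_adjoin_coe_preimage

lemma wY_pow_apply (n : ℕ) (p : ℂ[X]) : (wY ^ n : A1).1 p = X ^ n * p := by
  change (LinearMap.mulLeft ℂ X ^ n) p = _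
  rw [LinearMap.pow_mulLeft, LinearMap.mulLeft_apply]

lemma wY_mul_wD_sub_apply_X_pow (c : ℂ) (j : ℕ) :
    (wY * wD - algebraMap ℂ A1 c).1 (X ^ j) = ((j : ℂ) - c) • (X ^ j : ℂ[X]) := by
  change X * derivative (X ^ j) - c • (X ^ j : ℂ[X]) = _
  rw [sub_smul]
  congr 1
  rcases j with _ | j
  · simp
  · rw [derivative_X_pow, Nat.add_sub_cancel, smul_eq_C_mul]
    ring

lemma exists_coeff_mul_add_mul_wY_pow_apply (a b : A1) (c : ℂ) {m : ℕ} (hm : 0 < m) :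
    ∃ p q : ℂ[X], q.eval 0 = 0 ∧ ∀ j : ℕ,
      ((a * (wY * wD - algebraMap ℂ A1 c) + b * wY ^ m).1 (X ^ j)).coeff j =
        (p * (X - C c) + q.comp (X + C (m : ℂ))).eval (j : ℂ) := by
  obtain ⟨p, hp⟩ := A1_le_polynomialDiagonals a.2 0 0
  obtain ⟨q, hq⟩ := A1_le_polynomialDiagonals b.2 m 0
  simp only [pow_zero, one_mul, add_zero] at hp hq
  have hq_zero : q.eval 0 = 0 := by
    have hentry := hq 0
    rwa [coeff_X_pow_mul', if_neg (by omega), Nat.cast_zero, eq_comm] at hentry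
  refine ⟨p, q, hq_zero, fun j => ?_⟩
  have happly : (a * (wY * wD - algebraMap ℂ A1 c) + b * wY ^ m).1 (X ^ j) =
      ((j : ℂ) - c) • a.1 (X ^ j) + b.1 (X ^ (j + m)) := by
    change a.1 ((wY * wD - algebraMap ℂ A1 c).1 (X ^ j)) + b.1 ((wY ^ m : A1).1 (X ^ j)) = _
    rw [wY_mul_wD_sub_apply_X_pow, wY_pow_apply, map_smul, ← pow_add, add_comm m]
  have hqj : (b.1 (X ^ (j + m))).coeff j = q.eval ((j : ℂ) + m) := by
    rw [← Nat.cast_add, ← hq, coeff_X_pow_mul]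
  simp only [happly, coeff_add, coeff_smul, hp, hqj, smul_eq_mul, eval_add, eval_mul, eval_comp,
    eval_sub, eval_X, eval_C, mul_comm]

lemma span_wY_mul_wD_sub_wY_pow_ne_top {m : ℕ} (hm : 0 < m) :
    Ideal.span {wY * wD - algebraMap ℂ A1 (-m), wY ^ m} ≠ ⊤ := by
  rw [Ne, Ideal.eq_top_iff_one, Ideal.mem_span_pair]
  rintro ⟨a, b, hab⟩
  obtain ⟨p, q, hq, hcoeff⟩ := exists_coeff_mul_add_mul_wY_pow_apply a b (-m) hm
  have hval (j : ℕ) : (p * (X - C (-(m : ℂ))) + q.comp (X + C (m : ℂ))).eval (j : ℂ) =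
      (1 : ℂ[X]).eval (j : ℂ) := by
    rw [← hcoeff, hab, OneMemClass.coe_one, Module.End.one_apply, coeff_X_pow_self, eval_one]
  have hpoly : p * (X - C (-(m : ℂ))) + q.comp (X + C (m : ℂ)) = 1 :=
    eq_of_infinite_eval_eq _ _ <|
      (Set.infinite_range_of_injective (Nat.cast_injective (R := ℂ))).mono <|
        Set.range_subset_iff.2 hval
  simpa [hq] using congrArg (eval (-(m : ℂ))) hpoly

/-- for `k ≥ 1` and an integer `γ` with `−k ≤ γ ≤ −1`, the left ideal
`J = A₁(Y∂ − γ) + A₁Y^k` satisfies `J = A₁(Y∂ − γ) + A₁Y^{|γ|}`, and `J` is a maximal left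
ideal of `A₁` (equivalently, `A₁/J` is a simple `A₁`-module; it is isomorphic to
`ℂ[y]_y/ℂ[y]`). -/
theorem stmt15 (k : ℕ) (hk : 1 ≤ k) (γ : ℤ) (h1 : -(k : ℤ) ≤ γ) (h2 : γ ≤ -1)
    (J : Ideal A1)
    (hJ : J = Ideal.span {wY * wD - algebraMap ℂ A1 (γ : ℂ), wY ^ k}) :
    J = Ideal.span {wY * wD - algebraMap ℂ A1 (γ : ℂ), wY ^ γ.natAbs} ∧ J.IsMaximal := by
  obtain ⟨r, rfl⟩ : ∃ r : ℕ, γ = -((r + 1 : ℕ) : ℤ) := ⟨γ.natAbs - 1, by omega⟩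
  have hcast : ((-((r + 1 : ℕ) : ℤ) : ℤ) : ℂ) = -((r + 1 : ℕ) : ℂ) := by push_cast; rfl
  have hne (n : ℕ) (hn : n ≠ r) : -((r + 1 : ℕ) : ℂ) + n + 1 ≠ 0 := by
    have hdiff : -((r + 1 : ℕ) : ℂ) + n + 1 = n - r := by push_cast; ring
    rw [hdiff, sub_ne_zero]
    exact_mod_cast hn
  rw [Int.natAbs_neg, Int.natAbs_natCast]
  rw [hcast] at hJ ⊢
  have hspan : J = Ideal.span {wY * wD - algebraMap ℂ A1 (-((r + 1 : ℕ) : ℂ)), wY ^ (r + 1)} :=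
    hJ.trans <| span_pair_pow_eq_span_pair_pow (A := A1) wD_mul_wY (by omega)
      fun n hn _ => hne n (by omega)
  exact ⟨hspan, hspan ▸ isMaximal_of_pow_succ_mem (A := A1) wD_mul_wY adjoin_wY_wD
    (span_wY_mul_wD_sub_wY_pow_ne_top r.succ_pos) (Ideal.subset_span (Set.mem_insert _ _))
    (Ideal.subset_span (Set.mem_insert_of_mem _ rfl)) fun n hn => hne n hn.ne⟩
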